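/- Let Φ: ℝ → ℝ be smooth with support contained in [−1,1], and set φ := −Φ''. Let r ∈ (0,1), λ ≥ r^{−1} with rλ ∈ ℕ, N ≥ 1 an integer, and k a unit vector with Nk ∈ ℤ³, and let Φ_(k) and φ_(k) be the intermittent shear profiles on ℝ³ built from Φ and φ respectively with these parameters. Let (k, k₁, k₂) be an orthonormal basis of ℝ³ with k₁ × k₂ = k. Then the vector field V(x) := (N² λ²)^{−1} Φ_(k)(x) k₁ satisfies curl curl V (x) = φ_(k)(x) k₁ for all x ∈ ℝ³. -/

import Mathlib

/-!
STATEMENT 11: The corrector identity: with Φ smooth supported in [−1,1], φ := −Φ'', and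
(k, k₁, k₂) an orthonormal basis with k₁ × k₂ = k, the vector field
V(x) = (N²λ²)^{−1} Φ_(k)(x) k₁ satisfies curl curl V = φ_(k) k₁.
-/

noncomputable section

open MeasureTheory Real
open scoped ENNReal

/-- Partial derivative in the i-th coordinate direction. -/
def pd (i : Fin 3) (f : (Fin 3 → ℝ) → ℝ) (x : Fin 3 → ℝ) : ℝ := fderiv ℝ f x (Pi.single i 1)

/-- The curl of a vector field on ℝ³. -/
def curl (F : (Fin 3 → ℝ) → (Fin 3 → ℝ)) (x : Fin 3 → ℝ) : Fin 3 → ℝ :=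
  ![pd 1 (fun y => F y 2) x - pd 2 (fun y => F y 1) x,
    pd 2 (fun y => F y 0) x - pd 0 (fun y => F y 2) x,
    pd 0 (fun y => F y 1) x - pd 1 (fun y => F y 0) x]

/-- The cross product on ℝ³. -/
def cross (a b : Fin 3 → ℝ) : Fin 3 → ℝ :=
  ![a 1 * b 2 - a 2 * b 1, a 2 * b 0 - a 0 * b 2, a 0 * b 1 - a 1 * b 0]

/-- The 2π-periodization of the rescaled profile r^{−1/2} ψ(·/r). -/
def periodize (r : ℝ) (ψ : ℝ → ℝ) (y : ℝ) : ℝ :=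
  ∑' n : ℤ, (Real.sqrt r)⁻¹ * ψ ((y + 2 * π * (n : ℝ)) / r)

/-- The intermittent shear profile ψ_(k)(x) = ψ_r(λ r N k·x). -/
def shear (ψ : ℝ → ℝ) (r lam : ℝ) (N : ℕ) (k : Fin 3 → ℝ) (x : Fin 3 → ℝ) : ℝ :=
  periodize r ψ (lam * r * (N : ℝ) * ∑ i, k i * x i)

/-
`Φ_(k)` is a plane wave: it depends on `x` only through `ξ ⬝ᵥ x` with `ξ = (λ r N) k`. On plane
waves `x ↦ G (ξ ⬝ᵥ x)` the curl acts as `G ↦ ξ ⨯₃ G'`, so the double curl is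
`ξ ⨯₃ (ξ ⨯₃ G'') = -|ξ|² G''` once `G` is orthogonal to `ξ`. Here `|ξ|² = λ² r² N²`, and the factor
`r²` cancels the `r⁻²` produced by differentiating the rescaled profile `Φ (· / r)` twice.
-/

section Periodization

open Filter
open scoped Pointwise

theorem locallyFinite_support_comp_add {ι G M : Type*} [TopologicalSpace G] [AddGroup G]
    [IsTopologicalAddGroup G] [WeaklyLocallyCompactSpace G] [Zero M] {f : G → M} {v : ι → G}
    (hf : HasCompactSupport f) (hv : Tendsto v cofinite (cocompact G)) :
    LocallyFinite fun i => Function.support fun x => f (x + v i) := by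
  intro x
  obtain ⟨K, hK, hKx⟩ := exists_compact_mem_nhds x
  have hfin : (v ⁻¹' (-K + tsupport f)).Finite := by
    simpa using hv (hK.neg.add hf.isCompact).compl_mem_cocompact
  refine ⟨K, hKx, hfin.subset ?_⟩
  rintro i ⟨y, hy, hyK⟩
  exact ⟨-y, Set.neg_mem_neg.mpr hyK, y + v i, subset_tsupport f hy, neg_add_cancel_left y (v i)⟩

theorem hasDerivAt_tsum_of_locallyFinite_support {ι 𝕜 F : Type*} [NontriviallyNormedField 𝕜]
    [NormedAddCommGroup F] [NormedSpace 𝕜 F] {f : ι → 𝕜 → F} {f' : ι → F} {x : 𝕜}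
    (hf : LocallyFinite fun i => Function.support (f i)) (hf' : ∀ i, HasDerivAt (f i) (f' i) x) :
    HasDerivAt (fun y => ∑' i, f i y) (∑' i, f' i) x := by
  obtain ⟨s, hs⟩ := hf.exists_finset_support x
  have hzero : ∀ᶠ y in nhds x, ∀ i ∉ s, f i y = 0 :=
    hs.mono fun y hy i hi => by_contra fun h => hi (hy h)
  have hzero' : ∀ i ∉ s, f' i = 0 := fun i hi =>
    (hf' i).unique <| (hasDerivAt_const x 0).congr_of_eventuallyEq <| hzero.mono fun y hy => hy i hi
  rw [tsum_eq_sum hzero']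
  exact (HasDerivAt.fun_sum fun i _ => hf' i).congr_of_eventuallyEq <|
    hzero.mono fun y hy => tsum_eq_sum hy

variable {r : ℝ} {ψ : ℝ → ℝ}

theorem locallyFinite_support_periodize (hr : r ≠ 0) (hψ : HasCompactSupport ψ) :
    LocallyFinite fun n : ℤ => Function.support fun y => ψ ((y + 2 * π * n) / r) := by
  have hscaled : HasCompactSupport fun y => ψ (y / r) := by
    simpa only [smul_eq_mul, inv_mul_eq_div] using hψ.comp_smul (inv_ne_zero hr)
  have hshift : Tendsto (fun n : ℤ => 2 * π * n) cofinite (cocompact ℝ) := by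
    refine (Int.tendsto_zmultiplesHom_cofinite two_pi_pos.ne').congr fun n => ?_
    rw [zmultiplesHom_apply, zsmul_eq_mul, mul_comm]
  exact locallyFinite_support_comp_add hscaled hshift

theorem hasDerivAt_periodize (hr : r ≠ 0) (hψ : HasCompactSupport ψ) (hd : Differentiable ℝ ψ)
    (y : ℝ) : HasDerivAt (periodize r ψ) (r⁻¹ * periodize r (deriv ψ) y) y := by
  have hterm (n : ℤ) : HasDerivAt (fun y => (√r)⁻¹ * ψ ((y + 2 * π * n) / r))
      (r⁻¹ * ((√r)⁻¹ * deriv ψ ((y + 2 * π * n) / r))) y := by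
    have harg : HasDerivAt (fun y => (y + 2 * π * n) / r) (1 / r) y :=
      ((hasDerivAt_id y).add_const _).div_const r
    refine (((hd _).hasDerivAt.comp y harg).const_mul (√r)⁻¹).congr_deriv ?_
    ring
  have hlf : LocallyFinite fun n : ℤ =>
      Function.support fun y => (√r)⁻¹ * ψ ((y + 2 * π * n) / r) :=
    (locallyFinite_support_periodize hr hψ).subset fun _ =>
      Function.support_mul_subset_right _ _
  rw [periodize, ← tsum_mul_left]
  exact hasDerivAt_tsum_of_locallyFinite_support hlf hterm

theorem periodize_neg (r : ℝ) (ψ : ℝ → ℝ) (y : ℝ) :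
    periodize r (fun s => -ψ s) y = -periodize r ψ y := by
  simp only [periodize, mul_neg, tsum_neg]

end Periodization

section PlaneWave

open scoped Matrix

variable {ξ x : Fin 3 → ℝ}

theorem pd_comp_dotProduct {g : ℝ → ℝ} {g' : ℝ} (hg : HasDerivAt g g' (ξ ⬝ᵥ x)) (i : Fin 3) :
    pd i (fun y => g (ξ ⬝ᵥ y)) x = g' * ξ i := by
  have hdot : HasFDerivAt (fun y => ξ ⬝ᵥ y) (dotProductBilin ℝ ℝ ξ).toContinuousLinearMap x :=
    (dotProductBilin ℝ ℝ ξ).toContinuousLinearMap.hasFDerivAt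
  have hfderiv : fderiv ℝ (fun y => g (ξ ⬝ᵥ y)) x = _ := (hg.comp_hasFDerivAt x hdot).fderiv
  simp [pd, hfderiv]

theorem curl_comp_dotProduct {G : ℝ → Fin 3 → ℝ} {G' : Fin 3 → ℝ}
    (hG : HasDerivAt G G' (ξ ⬝ᵥ x)) : curl (fun y => G (ξ ⬝ᵥ y)) x = ξ ⨯₃ G' := by
  have hpd (i j : Fin 3) : pd i (fun y => G (ξ ⬝ᵥ y) j) x = ξ i * G' j := by
    rw [pd_comp_dotProduct (hasDerivAt_pi.mp hG j), mul_comm]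
  simp only [curl, hpd, cross_apply]

theorem curl_curl_comp_dotProduct {G G' : ℝ → Fin 3 → ℝ} {G'' : Fin 3 → ℝ}
    (hG : ∀ s, HasDerivAt G (G' s) s) (hG' : HasDerivAt G' G'' (ξ ⬝ᵥ x)) :
    curl (curl fun y => G (ξ ⬝ᵥ y)) x = ξ ⨯₃ (ξ ⨯₃ G'') := by
  have hcurl : (curl fun y => G (ξ ⬝ᵥ y)) = fun y => ξ ⨯₃ G' (ξ ⬝ᵥ y) :=
    funext fun _ => curl_comp_dotProduct (hG _)
  have hcross : HasDerivAt (fun s => ξ ⨯₃ G' s) (ξ ⨯₃ G'') (ξ ⬝ᵥ x) :=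
    (crossProduct ξ).toContinuousLinearMap.hasFDerivAt.comp_hasDerivAt _ hG'
  rw [hcurl, curl_comp_dotProduct hcross]

theorem curl_curl_comp_dotProduct_smul {g g' : ℝ → ℝ} {g'' : ℝ} {a : Fin 3 → ℝ}
    (hg : ∀ s, HasDerivAt g (g' s) s) (hg' : HasDerivAt g' g'' (ξ ⬝ᵥ x)) (ha : ξ ⬝ᵥ a = 0) :
    curl (curl fun y => g (ξ ⬝ᵥ y) • a) x = -((ξ ⬝ᵥ ξ) * g'') • a := by
  rw [curl_curl_comp_dotProduct (fun s => (hg s).smul_const a) (hg'.smul_const a),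
    cross_cross_eq_smul_sub_smul', dotProduct_smul, ha]
  simp only [smul_zero, zero_smul, zero_sub, neg_smul, mul_smul]

end PlaneWave

theorem shear_eq_periodize_dotProduct (ψ : ℝ → ℝ) (r lam : ℝ) (N : ℕ) (k x : Fin 3 → ℝ) :
    shear ψ r lam N k x = periodize r ψ (((lam * r * N) • k) ⬝ᵥ x) := by
  rw [smul_dotProduct]
  rfl

theorem corrector_curl_curl_identity_general
    (Φ : ℝ → ℝ) (hΦ : Differentiable ℝ Φ) (hΦ' : Differentiable ℝ (deriv Φ))
    (hΦsupp : HasCompactSupport Φ)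
    (r lam : ℝ) (hr : 0 < r) (hlam : lam ≠ 0) (N : ℕ) (hN : N ≠ 0)
    (k k₁ : Fin 3 → ℝ) (hk : ∑ i, k i ^ 2 = 1) (hkk₁ : ∑ i, k i * k₁ i = 0)
    (x : Fin 3 → ℝ) (i : Fin 3) :
    curl (curl (fun y j => ((N : ℝ) ^ 2 * lam ^ 2)⁻¹ * shear Φ r lam N k y * k₁ j)) x i
      = shear (fun s => -(deriv (deriv Φ) s)) r lam N k x * k₁ i := by
  set c : ℝ := ((N : ℝ) ^ 2 * lam ^ 2)⁻¹ with hc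
  set ξ : Fin 3 → ℝ := (lam * r * N) • k with hξ
  have hξk₁ : ξ ⬝ᵥ k₁ = 0 := by
    rw [hξ, smul_dotProduct, dotProduct, hkk₁, smul_zero]
  have hξξ : ξ ⬝ᵥ ξ = (lam * r * N) ^ 2 := by
    have hkk : k ⬝ᵥ k = 1 := by simpa only [dotProduct, sq] using hk
    rw [hξ, smul_dotProduct, dotProduct_smul, hkk, smul_eq_mul, smul_eq_mul, mul_one, sq]
  have hprofile (s : ℝ) : HasDerivAt (fun t => c * periodize r Φ t)
      (c * (r⁻¹ * periodize r (deriv Φ) s)) s :=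
    (hasDerivAt_periodize hr.ne' hΦsupp hΦ s).const_mul c
  have hprofile' (s : ℝ) : HasDerivAt (fun t => c * (r⁻¹ * periodize r (deriv Φ) t))
      (c * (r⁻¹ * (r⁻¹ * periodize r (deriv (deriv Φ)) s))) s :=
    ((hasDerivAt_periodize hr.ne' hΦsupp.deriv hΦ' s).const_mul r⁻¹).const_mul c
  have hcurl := congrFun (curl_curl_comp_dotProduct_smul hprofile (hprofile' (ξ ⬝ᵥ x)) hξk₁) i
  have hcoeff : (lam * r * N) ^ 2 * (c * (r⁻¹ * r⁻¹)) = 1 := by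
    rw [hc]
    field_simp
  simp only [shear_eq_periodize_dotProduct, ← hξ, periodize_neg]
  refine hcurl.trans ?_
  rw [hξξ, Pi.smul_apply, smul_eq_mul]
  linear_combination (-periodize r (deriv (deriv Φ)) (ξ ⬝ᵥ x) * k₁ i) * hcoeff

theorem corrector_curl_curl_identity
    (Φ : ℝ → ℝ) (hΦ : ContDiff ℝ (⊤ : ℕ∞) Φ)
    (hΦsupp : Function.support Φ ⊆ Set.Icc (-1 : ℝ) 1)
    (r lam : ℝ) (hr : 0 < r) (hr1 : r < 1) (hlam : r⁻¹ ≤ lam)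
    (hrlam : ∃ m : ℕ, r * lam = (m : ℝ))
    (N : ℕ) (hN : 1 ≤ N)
    (k k₁ k₂ : Fin 3 → ℝ)
    (hk : ∑ i, k i ^ 2 = 1) (hk₁ : ∑ i, k₁ i ^ 2 = 1) (hk₂ : ∑ i, k₂ i ^ 2 = 1)
    (hkk₁ : ∑ i, k i * k₁ i = 0) (hkk₂ : ∑ i, k i * k₂ i = 0)
    (hk₁k₂ : ∑ i, k₁ i * k₂ i = 0)
    (hcross : cross k₁ k₂ = k)
    (hkZ : ∀ i, ∃ z : ℤ, (N : ℝ) * k i = (z : ℝ)) :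
    ∀ x : Fin 3 → ℝ, ∀ i : Fin 3,
      curl (curl (fun y j => ((N : ℝ) ^ 2 * lam ^ 2)⁻¹ * shear Φ r lam N k y * k₁ j)) x i
        = shear (fun s => -(deriv (deriv Φ) s)) r lam N k x * k₁ i :=
  corrector_curl_curl_identity_general Φ (hΦ.differentiable (by simp))
    (contDiff_infty.mp hΦ 2).differentiable_deriv_two
    (.of_support_subset_isCompact isCompact_Icc hΦsupp) r lam hr
    ((inv_pos.mpr hr).trans_le hlam).ne' N (Nat.one_le_iff_ne_zero.mp hN) k k₁ hk hkk₁

end
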